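/- arXiv:2412.09525 — 4 statements merged into one kernel-verified Lean document; each statement's English description precedes it below -/
import Mathlib

section
/- Let r be an odd prime, let a be an integer, and let f be a positive integer divisible by r. If a^f ≡ 1 (mod r), then a^f ≡ 1 (mod r²). -/
/-- Let `r` be an odd prime, `a` an integer and `f` a positive integer divisible by `r`.
If `a ^ f ≡ 1 (mod r)`, then `a ^ f ≡ 1 (mod r²)`. -/
theorem pow_modEq_one_sq {r : ℕ} (hr : r.Prime) (hodd : Odd r)
    (a : ℤ) (f : ℕ) (hf : 0 < f) (hrf : r ∣ f)
    (h : a ^ f ≡ 1 [ZMOD (r : ℤ)]) :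
    a ^ f ≡ 1 [ZMOD ((r : ℤ) ^ 2)] := by
  obtain ⟨m, rfl⟩ := hrf
  haveI : Fact r.Prime := ⟨hr⟩
  -- By Fermat, `a ^ m ≡ 1 (mod r)`.
  have h1 : a ^ m ≡ 1 [ZMOD (r : ℤ)] := by
    rw [← ZMod.intCast_eq_intCast_iff] at h ⊢
    rw [mul_comm, pow_mul, Int.cast_pow, ZMod.pow_card] at h
    exact h
  -- Raising to the `r`-th power lifts the congruence to modulus `r ^ 2`.
  have h2 := dvd_sub_pow_of_dvd_sub (R := ℤ) h1.symm.dvd 1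
  rw [pow_one, one_pow, ← pow_mul, mul_comm m r] at h2
  exact (Int.modEq_of_dvd h2).symm
end

section
/- Let r be an odd prime, let a be an integer, and let f be a positive integer divisible by r. If a^f ≡ −1 (mod r), then a^f ≡ −1 (mod r²). -/
/-- Let `r` be an odd prime, `a` an integer and `f` a positive integer divisible by `r`.
If `a ^ f ≡ −1 (mod r)`, then `a ^ f ≡ −1 (mod r²)`. -/
theorem pow_modEq_neg_one_sq {r : ℕ} (hr : r.Prime) (hodd : Odd r)
    (a : ℤ) (f : ℕ) (hf : 0 < f) (hrf : r ∣ f)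
    (h : a ^ f ≡ -1 [ZMOD (r : ℤ)]) :
    a ^ f ≡ -1 [ZMOD ((r : ℤ) ^ 2)] := by
  obtain ⟨k, rfl⟩ := hrf
  haveI : Fact r.Prime := ⟨hr⟩
  rw [mul_comm, pow_mul] at h ⊢
  have h1 : (a ^ k) ≡ -1 [ZMOD (r : ℤ)] := by
    rw [← ZMod.intCast_eq_intCast_iff] at h ⊢
    rw [← h, Int.cast_pow (a ^ k) r, ZMod.pow_card]
  have h2 : (r : ℤ) ∣ a ^ k - (-1) := h1.symm.dvd
  have h3 := dvd_sub_pow_of_dvd_sub h2 1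
  rw [pow_one, hodd.neg_one_pow] at h3
  exact (Int.modEq_iff_dvd.mpr h3).symm
end

section
/- Let G be a finite group whose Sylow 2-subgroups are Klein four groups, i.e. have order 4 and exponent 2. Let P be a Sylow 2-subgroup of G and suppose there are two nontrivial elements of P that are not conjugate in G. Then G has a normal 2-complement: a normal subgroup N of G of index 4 whose order is odd. -/
theorem klein_four_normalizer_le_centralizer
    {G : Type*} [Group G] [Finite G] (P : Sylow 2 G)
    (hc : Nat.card (P : Subgroup G) = 4) (h2 : ∀ x ∈ (P : Subgroup G), x * x = 1)
    (x y : G) (hx : x ∈ (P : Subgroup G)) (hy : y ∈ (P : Subgroup G))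
    (hx1 : x ≠ 1) (hy1 : y ≠ 1) (hconj : ¬ IsConj x y) :
    Subgroup.normalizer ((P : Subgroup G) : Set G) ≤
      Subgroup.centralizer ((P : Subgroup G) : Set G) := by
  classical
  have hxy : x ≠ y := fun h => hconj (h ▸ IsConj.refl x)
  have hxx := h2 x hx
  have hyy := h2 y hy
  have hxy1 : x * y ≠ 1 := fun h => hxy (by
    have : x * (x * y) = x := by rw [h, mul_one]
    rw [← mul_assoc, hxx, one_mul] at this
    exact this.symm)
  have hcomm : x * y = y * x := by
    have h := h2 _ (mul_mem hx hy)
    have hxi : x⁻¹ = x := inv_eq_of_mul_eq_one_left hxx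
    have hyi : y⁻¹ = y := inv_eq_of_mul_eq_one_left hyy
    rw [← inv_eq_of_mul_eq_one_left h, mul_inv_rev, hxi, hyi]
  -- the four elements of P
  have hP : ∀ z ∈ (P : Subgroup G), z = 1 ∨ z = x ∨ z = y ∨ z = x * y := by
    intro z hz
    have hs : (({1, x, y, x * y} : Finset G) : Set G) = ((P : Subgroup G) : Set G) := by
      apply Set.eq_of_subset_of_ncard_le
      · intro w hw
        simp only [Finset.coe_insert, Finset.coe_singleton, Set.mem_insert_iff,
          Set.mem_singleton_iff] at hw
        rcases hw with rfl | rfl | rfl | rfl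
        · exact one_mem _
        · exact hx
        · exact hy
        · exact mul_mem hx hy
      · rw [Set.ncard_coe_finset]
        have h4 : ({1, x, y, x * y} : Finset G).card = 4 := by
          rw [Finset.card_insert_of_notMem, Finset.card_insert_of_notMem,
            Finset.card_insert_of_notMem, Finset.card_singleton]
          · simpa using hx1
          · simp [hxy, hy1]
          · simp [hx1.symm, hy1.symm, hxy1.symm]
        rw [h4]
        exact hc.le
      · exact Set.toFinite _
    have : z ∈ (({1, x, y, x * y} : Finset G) : Set G) := hs ▸ hz
    simpa using this
  have hcent : ∀ g : G, g * x = x * g → g * y = y * g →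
      g ∈ Subgroup.centralizer ((P : Subgroup G) : Set G) := by
    intro g h1 h3
    rw [Subgroup.mem_centralizer_iff]
    intro z hz
    rcases hP z hz with rfl | rfl | rfl | rfl
    · simp
    · exact h1.symm
    · exact h3.symm
    · rw [mul_assoc, ← h3, ← mul_assoc, ← h1, mul_assoc]
  intro n hn
  have hn' := Subgroup.mem_normalizer_iff.1 hn
  have hX : n * x * n⁻¹ = x ∨ n * x * n⁻¹ = x * y := by
    rcases hP _ ((hn' x).1 hx) with h | h | h | h
    · exact absurd (by simpa using h) hx1
    · exact Or.inl h
    · exact absurd (isConj_iff.2 ⟨n, h⟩) hconj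
    · exact Or.inr h
  have hY : n * y * n⁻¹ = y ∨ n * y * n⁻¹ = x * y := by
    rcases hP _ ((hn' y).1 hy) with h | h | h | h
    · exact absurd (by simpa using h) hy1
    · exact absurd (isConj_iff.2 ⟨n, h⟩).symm hconj
    · exact Or.inl h
    · exact Or.inr h
  rw [mul_inv_eq_iff_eq_mul, mul_inv_eq_iff_eq_mul] at hX hY
  have hn2 : n ^ 2 ∈ Subgroup.centralizer ((P : Subgroup G) : Set G) := by
    rw [pow_two]
    rcases hX with hX | hX <;> rcases hY with hY | hY
    · apply hcent
      · rw [mul_assoc, hX, ← mul_assoc, hX, mul_assoc]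
      · rw [mul_assoc, hY, ← mul_assoc, hY, mul_assoc]
    · apply hcent
      · rw [mul_assoc, hX, ← mul_assoc, hX, mul_assoc]
      · calc n * n * y = n * (n * y) := mul_assoc _ _ _
          _ = (n * x) * (y * n) := by rw [hY]; group
          _ = x * (n * y) * n := by rw [hX]; group
          _ = (x * x) * y * (n * n) := by rw [hY]; group
          _ = y * (n * n) := by rw [hxx, one_mul]
    · apply hcent
      · calc n * n * x = n * (n * x) := mul_assoc _ _ _
          _ = n * (x * y * n) := by rw [hX]
          _ = (n * x) * (y * n) := by group
          _ = x * y * (n * y) * n := by rw [hX]; group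
          _ = x * (y * y) * (n * n) := by rw [hY]; group
          _ = x * (n * n) := by rw [hyy, mul_one]
      · rw [mul_assoc, hY, ← mul_assoc, hY, mul_assoc]
    · exact absurd (mul_left_cancel (hX.trans hY.symm)) hxy
  obtain ⟨k, m, hm, hkm⟩ := Nat.exists_eq_two_pow_mul_odd (orderOf_pos n).ne'
  have hpg : IsPGroup 2 (Subgroup.zpowers (n ^ m)) := by
    apply IsPGroup.of_card (n := k)
    rw [Nat.card_zpowers, orderOf_pow_of_dvd hm.pos.ne' ⟨2 ^ k, by rw [hkm, mul_comm]⟩, hkm,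
      Nat.mul_div_cancel _ hm.pos]
  have hmP : n ^ m ∈ (P : Subgroup G) := by
    have h : n ^ m ∈ Subgroup.zpowers (n ^ m) ⊓ Subgroup.normalizer ((P : Subgroup G) : Set G) :=
      ⟨Subgroup.mem_zpowers _, pow_mem hn _⟩
    exact ((hpg.inf_normalizer_sylow P).le h).2
  have hmC : n ^ m ∈ Subgroup.centralizer ((P : Subgroup G) : Set G) := by
    rcases hP _ hmP with h | h | h | h <;> rw [h]
    · exact one_mem _
    · exact hcent _ rfl hcomm
    · exact hcent _ hcomm.symm rfl
    · exact mul_mem (hcent _ rfl hcomm) (hcent _ hcomm.symm rfl)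
  obtain ⟨j, rfl⟩ := hm
  rw [pow_succ, pow_mul] at hmC
  exact (Subgroup.mul_mem_cancel_left _ (pow_mem hn2 j)).1 hmC

/-- Let `G` be a finite group whose Sylow `2`-subgroups are Klein four groups (order `4`
and exponent `2`).  If some Sylow `2`-subgroup `P` contains two nontrivial elements which
are not conjugate in `G`, then `G` has a normal `2`-complement: a normal subgroup of
index `4` of odd order. -/
theorem normal_two_complement_of_klein_four_sylow
    {G : Type*} [Group G] [Finite G]
    (hKlein : ∀ Q : Sylow 2 G, Nat.card (Q : Subgroup G) = 4 ∧
      ∀ x : (Q : Subgroup G), x ^ 2 = 1)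
    (P : Sylow 2 G) (x y : G) (hx : x ∈ (P : Subgroup G)) (hy : y ∈ (P : Subgroup G))
    (hx1 : x ≠ 1) (hy1 : y ≠ 1) (hconj : ¬ IsConj x y) :
    ∃ N : Subgroup G, N.Normal ∧ N.index = 4 ∧ Odd (Nat.card N) := by
  obtain ⟨hc, h2⟩ := hKlein P
  have hNC := klein_four_normalizer_le_centralizer P hc
    (fun z hz => by simpa [pow_two] using congrArg Subtype.val (h2 ⟨z, hz⟩))
    x y hx hy hx1 hy1 hconj
  refine ⟨(MonoidHom.transferSylow P hNC).ker, inferInstance, ?_, ?_⟩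
  · have h := (MonoidHom.ker_transferSylow_isComplement' P hNC).card_mul_card
    have h' := Subgroup.card_mul_index (MonoidHom.transferSylow P hNC).ker
    rw [← h] at h'
    exact (Nat.eq_of_mul_eq_mul_left Nat.card_pos h').trans hc
  · rw [← Nat.not_even_iff_odd, even_iff_two_dvd]
    exact MonoidHom.not_dvd_card_ker_transferSylow P hNC
end

section
/- Let q = p^f be a power of an odd prime p. Then the Sylow 2-subgroups of PSL(2,q) have order 4 if and only if q ≡ 3 (mod 8) or q ≡ 5 (mod 8) (i.e. q ≡ ±3 (mod 8)). -/
/-- `PSL(2,q)` for `q = p^f`: the quotient of `SL(2, F_q)` by its center. -/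
abbrev PSL2 (p f : ℕ) [Fact p.Prime] :=
  Matrix.SpecialLinearGroup (Fin 2) (GaloisField p f) ⧸
    Subgroup.center (Matrix.SpecialLinearGroup (Fin 2) (GaloisField p f))

open Matrix in
lemma card_SL2_mul (K : Type) [Field K] [Finite K] :
    Nat.card (SpecialLinearGroup (Fin 2) K) * (Nat.card K - 1) =
      (Nat.card K ^ 2 - 1) * (Nat.card K ^ 2 - Nat.card K) := by
  have : Fintype K := Fintype.ofFinite K
  classical
  have h1 := Matrix.card_GL_field (𝔽 := K) 2
  have hsurj : Function.Surjective (GeneralLinearGroup.det : GL (Fin 2) K →* Kˣ) := by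
    intro u
    refine ⟨GeneralLinearGroup.mkOfDetNeZero !![(u : K), 0; 0, 1] (by simp), ?_⟩
    ext
    simp [GeneralLinearGroup.mkOfDetNeZero, GeneralLinearGroup.det]
  have hker : Nat.card (SpecialLinearGroup (Fin 2) K) =
      Nat.card (GeneralLinearGroup.det : GL (Fin 2) K →* Kˣ).ker := by
    refine Nat.card_congr (Equiv.ofBijective
      (fun A => ⟨SpecialLinearGroup.toGL A, by ext; simp⟩) ⟨?_, ?_⟩)
    · intro A B h
      ext i j
      have := congrArg (fun x => (x.1 : Matrix (Fin 2) (Fin 2) K) i j) h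
      simpa using this
    · rintro ⟨g, hg⟩
      refine ⟨⟨g.1, ?_⟩, ?_⟩
      · have := congrArg Units.val (MonoidHom.mem_ker.mp hg)
        simpa using this
      · ext i j
        rfl
  have h2 := (GeneralLinearGroup.det : GL (Fin 2) K →* Kˣ).ker.card_mul_index
  rw [Subgroup.index_ker, MonoidHom.range_eq_top.mpr hsurj, Subgroup.card_top, Nat.card_units,
    ← hker, h1] at h2
  simpa [Fin.prod_univ_two, Nat.card_eq_fintype_card] using h2

lemma card_center_SL2 (K : Type) [Field K] (h : ringChar K ≠ 2) :
    Nat.card (Subgroup.center (Matrix.SpecialLinearGroup (Fin 2) K)) = 2 := by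
  rw [Nat.card_congr (Matrix.SpecialLinearGroup.center_equiv_rootsOfUnity' (0 : Fin 2)).toEquiv]
  have hp : IsPrimitiveRoot (-1 : K) 2 := IsPrimitiveRoot.neg_one (ringChar K) h
  exact hp.card_rootsOfUnity

/-- Let `q = p^f` be a power of an odd prime `p`.  The Sylow `2`-subgroups of `PSL(2,q)`
have order `4` if and only if `q ≡ 3 (mod 8)` or `q ≡ 5 (mod 8)`. -/
theorem sylow_two_PSL2_card_four_iff
    (p f : ℕ) [Fact p.Prime] (hp : Odd p) (hf : 0 < f) (q : ℕ) (hq : q = p ^ f)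
    (P : Sylow 2 (PSL2 p f)) :
    Nat.card (P : Subgroup (PSL2 p f)) = 4 ↔ (q % 8 = 3 ∨ q % 8 = 5) := by
  have hP : p.Prime := Fact.out
  have hK : Nat.card (GaloisField p f) = q := by rw [hq, GaloisField.card p f hf.ne']
  have : Finite (GaloisField p f) := Nat.finite_of_card_ne_zero (by rw [hK, hq]; exact pow_ne_zero _ hP.ne_zero)
  have h1 := card_SL2_mul (GaloisField p f)
  have hchar : ringChar (GaloisField p f) ≠ 2 := by
    rw [ringChar.eq (GaloisField p f) p]
    rintro rfl
    exact absurd hp (by decide)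
  have h2 := card_center_SL2 (GaloisField p f) hchar
  have h3 := Subgroup.card_eq_card_quotient_mul_card_subgroup
    (Subgroup.center (Matrix.SpecialLinearGroup (Fin 2) (GaloisField p f)))
  rw [h2] at h3
  rw [h3, hK] at h1
  have hG0 : Nat.card (PSL2 p f) ≠ 0 := Nat.card_pos.ne'
  rw [P.card_eq_multiplicity]
  change Nat.card (PSL2 p f) * 2 * (q - 1) = _ at h1
  generalize Nat.card (PSL2 p f) = n at h1 hG0
  have hodd : Odd q := hq ▸ hp.pow
  have hq1 : 1 < q := hq ▸ Nat.one_lt_pow hf.ne' hP.one_lt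
  obtain ⟨m, rfl⟩ := hodd
  have hm : 0 < m := by omega
  have e1 : n = (2 * m + 1) * (2 * (m * (m + 1))) := by
    have a1 : (2 * m + 1) ^ 2 - 1 = 4 * (m * (m + 1)) := by
      have : (2 * m + 1) ^ 2 = 4 * (m * (m + 1)) + 1 := by ring
      omega
    have a2 : (2 * m + 1) ^ 2 - (2 * m + 1) = (2 * m + 1) * (2 * m) := by
      have : (2 * m + 1) ^ 2 = (2 * m + 1) * (2 * m) + (2 * m + 1) := by ring
      omega
    rw [a1, a2, Nat.add_sub_cancel] at h1
    apply Nat.eq_of_mul_eq_mul_right (show 0 < 2 * (2 * m) by omega)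
    linarith
  have key : 2 ^ n.factorization 2 = 4 ↔ (4 ∣ n ∧ ¬ 8 ∣ n) := by
    have b (k : ℕ) : 2 ^ k ∣ n ↔ k ≤ n.factorization 2 :=
      Nat.prime_two.pow_dvd_iff_le_factorization hG0
    have b2 := b 2
    have b3 := b 3
    norm_num at b2 b3
    rw [b2, b3, show (4 : ℕ) = 2 ^ 2 from rfl, (Nat.pow_right_injective le_rfl).eq_iff]
    omega
  rw [key, Nat.dvd_iff_mod_eq_zero, Nat.dvd_iff_mod_eq_zero]
  have e4 : n % 4 = n % 8 % 4 := by omega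
  have e8 : n % 8 = (2 * (m % 8) + 1) * (2 * ((m % 8) * (m % 8 + 1))) % 8 := by
    rw [e1]; simp [Nat.mul_mod, Nat.add_mod]
  have eq8 : (2 * m + 1) % 8 = (2 * (m % 8) + 1) % 8 := by omega
  rw [e4, e8, eq8]
  have hr : m % 8 < 8 := Nat.mod_lt _ (by norm_num)
  generalize m % 8 = r at hr
  interval_cases r <;> simp
end
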